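/- arXiv:1302.3417 — 4 statements merged into one kernel-verified Lean document; each statement's English description precedes it below -/
import Mathlib

section
/- There exists an absolute constant c > 0 such that the following holds. Let h ≥ 1, let G = (V, E) be a finite simple graph that is K_h-minor-free (K_h is the complete graph on h vertices), and let w : V → ℝ≥0 be vertex weights with Σ_{v ∈ V} w(v) = 1. Then for every β ∈ (0, 1] there is a set S ⊆ V with |S| ≤ c · h^{3/2} · |V|^{1/2} / β^{1/2} such that every connected component of the subgraph of G induced on V \ S has total vertex weight at most β. -/
def IsMinorOf {β α : Type*} (H : SimpleGraph β) (G : SimpleGraph α) : Prop :=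
  ∃ B : β → Set α,
    (∀ u, (B u).Nonempty) ∧
    (Pairwise fun u u' => Disjoint (B u) (B u')) ∧
    (∀ u, (G.induce (B u)).Connected) ∧
    (∀ u u', H.Adj u u' → ∃ a ∈ B u, ∃ a' ∈ B u', G.Adj a a')

def MinorFree {β α : Type*} (H : SimpleGraph β) (G : SimpleGraph α) : Prop :=
  ¬ IsMinorOf H G

/-!
Suppose that `r * r ≥ h * |V|` and that no set of `h * r` vertices separates `G` into components of
at most half the weight. The components of more than half the weight then form a haven, and a haven
of this order forces a `K_h` minor, which is grown from disjoint connected sets `C i`, each adjacent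
to the others, as follows. Separate the `C i` by at most `r` representatives each from the component
`B` which the haven assigns to these representatives. Either `B` contains a connected set of at most
`r` vertices touching all the `C i`, which becomes a new branch set, or there are at most `r`
vertices whose deletion leaves the haven in a part of `B` that has lost contact with some `C i`, and
this `C i` can absorb the rest. Both moves shrink `B`, so the process ends, with a `K_h` minor.

Thus every `U ⊆ V` is halved by removing `κ * √|U|` vertices, where `κ = 2 * h * √h`. Halving all
components `C` of weight more than `γ` at once costs `∑ κ * √|C| ≤ κ * √(|V| / γ)` vertices by the
Cauchy–Schwarz inequality, and these costs sum geometrically over `γ = 1/2, 1/4, …`.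
-/

namespace MinorSeparator

variable {V : Type*} {G : SimpleGraph V}

section ConnectedSets

variable {B B' C D W : Set V}

theorem subset_of_preconnected_of_forall_adj (hD : (G.induce D).Preconnected)
    (hne : (D ∩ W).Nonempty) (hW : ∀ a ∈ D ∩ W, ∀ b ∈ D, G.Adj a b → b ∈ W) : D ⊆ W := by
  obtain ⟨x, hxD, hxW⟩ := hne
  intro y hyD
  by_contra hyW
  obtain ⟨p⟩ := hD ⟨x, hxD⟩ ⟨y, hyD⟩
  obtain ⟨d, -, hd, hd'⟩ := p.exists_boundary_dart {z | (z : V) ∈ W} hxW hyW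
  exact hd' (hW d.fst ⟨d.fst.2, hd⟩ d.snd d.snd.2 d.adj)

theorem connected_induce_induce_iff {U : Set V} {D : Set U} :
    ((G.induce U).induce D).Connected ↔ (G.induce (Subtype.val '' D)).Connected :=
  SimpleGraph.Iso.connected_iff
    ⟨Equiv.Set.image Subtype.val D Subtype.val_injective, Iff.rfl⟩

theorem isMinorOf_of_induce {β : Type*} {H : SimpleGraph β} {U : Set V}
    (hH : IsMinorOf H (G.induce U)) : IsMinorOf H G := by
  obtain ⟨B, hne, hdisj, hconn, hadj⟩ := hH
  refine ⟨fun u ↦ Subtype.val '' B u, fun u ↦ (hne u).image _,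
    fun u u' huu' ↦ (Set.disjoint_image_iff Subtype.val_injective).2 (hdisj huu'),
    fun u ↦ connected_induce_induce_iff.1 (hconn u), fun u u' huu' ↦ ?_⟩
  obtain ⟨a, ha, a', ha', haa'⟩ := hadj u u' huu'
  exact ⟨a, ⟨a, ha, rfl⟩, a', ⟨a', ha', rfl⟩, haa'⟩

/-- `B` is (the vertex set of) a connected component of the subgraph of `G` induced on `W`.
Stating this inside `V` avoids transporting vertices between nested subtypes. -/
def IsComponentIn (G : SimpleGraph V) (W B : Set V) : Prop :=
  Maximal (fun D ↦ D ⊆ W ∧ (G.induce D).Connected) B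

theorem exists_isComponentIn_ge [Finite V] (hDW : D ⊆ W) (hD : (G.induce D).Connected) :
    ∃ B, D ⊆ B ∧ IsComponentIn G W B :=
  Finite.exists_le_maximal ⟨hDW, hD⟩

namespace IsComponentIn

theorem subset (hB : IsComponentIn G W B) : B ⊆ W := hB.prop.1

theorem connected (hB : IsComponentIn G W B) : (G.induce B).Connected := hB.prop.2

theorem nonempty (hB : IsComponentIn G W B) : B.Nonempty :=
  Set.nonempty_coe_sort.1 hB.connected.nonempty

theorem subset_of_connected (hB : IsComponentIn G W B) (hDW : D ⊆ W)
    (hD : (G.induce D).Connected) (hBD : (B ∩ D).Nonempty) : D ⊆ B :=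
  Set.subset_union_right.trans <| hB.le_of_ge
    ⟨Set.union_subset hB.subset hDW,
      SimpleGraph.induce_union_connected hB.connected.preconnected hD.preconnected hBD⟩
    Set.subset_union_left

theorem mem_of_adj (hB : IsComponentIn G W B) {a b : V} (ha : a ∈ B) (hb : b ∈ W)
    (hab : G.Adj a b) : b ∈ B :=
  hB.subset_of_connected (Set.pair_subset (hB.subset ha) hb)
    (SimpleGraph.induce_pair_connected_of_adj hab) ⟨a, ha, Set.mem_insert _ _⟩
    (Set.mem_insert_of_mem _ rfl)

theorem eq_or_disjoint (hB : IsComponentIn G W B) (hB' : IsComponentIn G W B') :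
    B = B' ∨ Disjoint B B' := by
  refine or_iff_not_imp_right.2 fun h ↦ ?_
  have hBB' : (B ∩ B').Nonempty := Set.not_disjoint_iff_nonempty_inter.1 h
  exact (hB'.subset_of_connected hB.subset hB.connected (Set.inter_comm B B' ▸ hBB')).antisymm
    (hB.subset_of_connected hB'.subset hB'.connected hBB')

end IsComponentIn

/-- Some vertex of `C` has a neighbour in `D`. -/
def SetAdj (G : SimpleGraph V) (C D : Set V) : Prop :=
  ∃ a ∈ C, ∃ b ∈ D, G.Adj a b

theorem SetAdj.symm (h : SetAdj G C D) : SetAdj G D C :=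
  let ⟨a, ha, b, hb, hab⟩ := h
  ⟨b, hb, a, ha, hab.symm⟩

theorem SetAdj.mono {C' D' : Set V} (hC : C ⊆ C') (hD : D ⊆ D') (h : SetAdj G C D) :
    SetAdj G C' D' :=
  let ⟨a, ha, b, hb, hab⟩ := h
  ⟨a, hC ha, b, hD hb, hab⟩

end ConnectedSets

section Transversals

variable {h r : ℕ} {B C : Set V} {A : Fin h → Set V} {j : ℕ} {u v : V}

/-- `T` is a connected subset of `B` containing `v` and meeting the first `j` of the sets `A i`:
the vertex set of a tree that connects `v` to each of them inside `B`. -/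
structure IsSteinerSet (G : SimpleGraph V) (B : Set V) (A : Fin h → Set V) (j : ℕ) (v : V)
    (T : Set V) : Prop where
  subset : T ⊆ B
  connected : (G.induce T).Connected
  mem : v ∈ T
  meets : ∀ i : Fin h, i < j → (T ∩ A i).Nonempty

/-- The least number of vertices of a Steiner set for `v` and the first `j` of the sets `A i`,
and `⊤` if there is none. -/
noncomputable def steinerSize (G : SimpleGraph V) (B : Set V) (A : Fin h → Set V) (j : ℕ)
    (v : V) : ℕ∞ :=
  sInf (Set.encard '' {T | IsSteinerSet G B A j v T})

theorem IsSteinerSet.steinerSize_le {T : Set V} (hT : IsSteinerSet G B A j v T) :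
    steinerSize G B A j v ≤ T.encard :=
  sInf_le ⟨T, hT, rfl⟩

theorem exists_isSteinerSet_encard_eq (hv : steinerSize G B A j v ≠ ⊤) :
    ∃ T, IsSteinerSet G B A j v T ∧ T.encard = steinerSize G B A j v := by
  have hne : (Set.encard '' {T | IsSteinerSet G B A j v T}).Nonempty :=
    Set.nonempty_iff_ne_empty.2 fun hempty ↦ hv (by rw [steinerSize, hempty, sInf_empty])
  exact csInf_mem hne

theorem steinerSize_zero_le_one (hv : v ∈ B) : steinerSize G B A 0 v ≤ 1 := by
  have hT : IsSteinerSet G B A 0 v {v} :=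
    ⟨Set.singleton_subset_iff.2 hv, .of_subsingleton, rfl, fun i hi ↦ absurd hi i.val.not_lt_zero⟩
  simpa using hT.steinerSize_le

theorem steinerSize_le_add_one_of_adj (huv : G.Adj u v) (hv : v ∈ B) :
    steinerSize G B A j v ≤ steinerSize G B A j u + 1 := by
  obtain hu | hu := eq_or_ne (steinerSize G B A j u) ⊤
  · simp [hu]
  obtain ⟨T, hT, hTcard⟩ := exists_isSteinerSet_encard_eq hu
  have hvT : IsSteinerSet G B A j v (T ∪ {v}) :=
    ⟨Set.union_subset hT.subset (Set.singleton_subset_iff.2 hv),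
      SimpleGraph.connected_induce_union hT.connected.preconnected .of_subsingleton hT.mem rfl huv,
      Or.inr rfl, fun i hi ↦ (hT.meets i hi).mono (Set.inter_subset_inter_left _
        Set.subset_union_left)⟩
  calc steinerSize G B A j v ≤ (T ∪ {v}).encard := hvT.steinerSize_le
    _ ≤ T.encard + ({v} : Set V).encard := Set.encard_union_le T {v}
    _ = steinerSize G B A j u + 1 := by rw [hTcard, Set.encard_singleton]

theorem steinerSize_succ_le_of_mem {i : Fin h} (hv : v ∈ A i) :
    steinerSize G B A (i + 1) v ≤ steinerSize G B A i v := by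
  refine le_sInf ?_
  rintro _ ⟨T, hT, rfl⟩
  refine IsSteinerSet.steinerSize_le ⟨hT.subset, hT.connected, hT.mem, fun k hk ↦ ?_⟩
  obtain hki | hki := (Nat.lt_succ_iff.1 hk).lt_or_eq
  · exact hT.meets k hki
  · exact ⟨v, hT.mem, Fin.ext hki ▸ hv⟩

theorem steinerSize_le_of_avoids {t : ℕ∞} (ht : 1 ≤ t) (hCB : C ⊆ B)
    (hC : (G.induce C).Preconnected) (hCA : ∀ i, (C ∩ A i).Nonempty)
    (havoid : ∀ v ∈ C, ∀ i : Fin h, steinerSize G B A (i + 1) v ≠ t) :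
    ∀ j ≤ h, ∀ v ∈ C, steinerSize G B A j v ≤ t := by
  intro j hj
  induction j with
  | zero => exact fun v hv ↦ (steinerSize_zero_le_one (hCB hv)).trans ht
  | succ j ih =>
    obtain ⟨u, huC, huA⟩ := hCA ⟨j, hj⟩
    have hu : steinerSize G B A (j + 1) u < t :=
      ((steinerSize_succ_le_of_mem huA).trans (ih (Nat.le_of_succ_le hj) u huC)).lt_of_ne
        (havoid u huC ⟨j, hj⟩)
    -- Along an edge the size grows by at most one, so inside `C` it cannot jump over the value `t`.
    have hsub : C ⊆ {v | steinerSize G B A (j + 1) v < t} :=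
      subset_of_preconnected_of_forall_adj hC ⟨u, huC, hu⟩ fun a ha b hb hab ↦
        ((steinerSize_le_add_one_of_adj hab (hCB hb)).trans
          (Order.add_one_le_of_lt ha.2)).lt_of_ne (havoid b hb ⟨j, hj⟩)
    exact fun v hv ↦ (hsub hv).le

theorem exists_ncard_setOf_steinerSize_eq_le {m : ℕ} (hB : B.Finite) (hr : 0 < r)
    (hm : h * B.ncard ≤ r * m) :
    ∃ t : ℕ, 1 ≤ t ∧ t ≤ r ∧
      {v ∈ B | ∃ i : Fin h, steinerSize G B A (i + 1) v = t}.ncard ≤ m := by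
  classical
  let pairs : Finset (Fin h × V) := Finset.univ ×ˢ hB.toFinset
  let levels : Finset ℕ∞ := (Finset.Icc 1 r).image Nat.cast
  have hlevels : levels.card = r := by
    rw [Finset.card_image_of_injective _ Nat.cast_injective, Nat.card_Icc, Nat.add_sub_cancel]
  have hpairs : pairs.card = h * B.ncard := by
    simp [pairs, Set.ncard_eq_toFinset_card B hB]
  obtain ⟨_, hlevel, hcard⟩ := Finset.exists_card_fiber_le_of_card_le_mul
    (f := fun p : Fin h × V ↦ steinerSize G B A (p.1 + 1) p.2)
    (Finset.card_pos.1 (hlevels ▸ hr)) (hlevels ▸ hpairs ▸ hm)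
  obtain ⟨t, ht, rfl⟩ := Finset.mem_image.1 hlevel
  refine ⟨t, (Finset.mem_Icc.1 ht).1, (Finset.mem_Icc.1 ht).2, le_trans ?_ hcard⟩
  rw [← Set.ncard_coe_finset]
  refine (Set.ncard_le_ncard ?_ ((Finset.finite_toSet _).image Prod.snd)).trans
    (Set.ncard_image_le (Finset.finite_toSet _))
  rintro v ⟨hvB, i, hi⟩
  exact ⟨(i, v), by simpa [pairs] using ⟨hvB, hi⟩, rfl⟩

/-- `Z` is a least populated level, among the first `r`, of the functions `steinerSize`. A
connected set that avoids it and meets every `A i` stays below that level, so it contains a vertex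
with a small Steiner set. -/
theorem exists_connected_or_cut {m : ℕ} (hB : B.Finite) (hr : 0 < r)
    (hm : h * B.ncard ≤ r * m) :
    (∃ T ⊆ B, (G.induce T).Connected ∧ T.ncard ≤ r ∧ ∀ i, (T ∩ A i).Nonempty) ∨
      ∃ Z : Set V, Z.ncard ≤ m ∧
        ∀ C ⊆ B \ Z, (G.induce C).Connected → ∃ i, Disjoint C (A i) := by
  obtain ⟨t, ht, htr, hcard⟩ := exists_ncard_setOf_steinerSize_eq_le (G := G) (A := A) hB hr hm
  refine or_iff_not_imp_right.2 fun hcut ↦ ?_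
  push Not at hcut
  obtain ⟨C, hCZ, hC, hCA⟩ := hcut _ hcard
  obtain ⟨v, hv⟩ := Set.nonempty_coe_sort.1 hC.nonempty
  have hle : steinerSize G B A h v ≤ t :=
    steinerSize_le_of_avoids (by exact_mod_cast ht) (fun u hu ↦ (hCZ hu).1) hC.preconnected
      (fun i ↦ Set.not_disjoint_iff_nonempty_inter.1 (hCA i))
      (fun u hu i hi ↦ (hCZ hu).2 ⟨(hCZ hu).1, i, hi⟩) h le_rfl v hv
  obtain ⟨T, hT, hTcard⟩ := exists_isSteinerSet_encard_eq (hle.trans_lt (ENat.natCast_lt_top t)).ne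
  refine ⟨T, hT.subset, hT.connected, ?_, fun i ↦ hT.meets i i.isLt⟩
  have : T.encard ≤ r := hTcard ▸ hle.trans (by exact_mod_cast htr)
  rw [← (hB.subset hT.subset).cast_ncard_eq] at this
  exact_mod_cast this

end Transversals

section Havens

variable {h k r : ℕ} {β : Set V → Set V} {C X : Fin h → Set V} {D S Y Z : Set V} {i : Fin h}

/-- A haven assigns to every set `S` of at most `k` vertices a component `β S` of `G - S`, called a
flap, in such a way that enlarging `S` shrinks its flap. This is meant for finite graphs:
`Set.ncard` is `0` on infinite sets. -/
structure IsHaven (G : SimpleGraph V) (k : ℕ) (β : Set V → Set V) : Prop where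
  isComponentIn : ∀ S, S.ncard ≤ k → IsComponentIn G Sᶜ (β S)
  anti : ∀ S T, T.ncard ≤ k → S ⊆ T → β T ⊆ β S

/-- A stage in the construction of a complete minor. The `C i` are disjoint connected sets, those
still to be built being empty, each with a set `X i` of at most `r` representatives, and the
construction continues in the flap that the haven `β` assigns to all representatives together. A set
that has lost contact with this flap will be discarded, so only the other ones have to be pairwise
adjacent. -/
structure IsPartialModel (G : SimpleGraph V) (β : Set V → Set V) (r : ℕ) (C X : Fin h → Set V) :
    Prop where
  preconnected : ∀ i, (G.induce (C i)).Preconnected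
  disjoint : ∀ i j, i ≠ j → Disjoint (C i) (C j)
  adj : ∀ i j, i ≠ j → SetAdj G (C i) (β (⋃ l, X l)) → SetAdj G (C j) (β (⋃ l, X l)) →
    SetAdj G (C i) (C j)
  subset : ∀ i, X i ⊆ C i
  ncard_le : ∀ i, (X i).ncard ≤ r
  disjoint_flap : ∀ i, Disjoint (C i) (β (⋃ l, X l))

theorem ncard_iUnion_le (hX : ∀ i, (X i).ncard ≤ r) : (⋃ i, X i).ncard ≤ h * r :=
  (Set.ncard_iUnion_le_of_fintype X).trans <|
    (Finset.sum_le_card_nsmul _ _ r fun i _ ↦ hX i).trans_eq (by simp)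

theorem subset_iUnion_update : Y ⊆ ⋃ j, Function.update X i Y j := by
  simpa using Set.subset_iUnion (Function.update X i Y) i

theorem iUnion_update_subset : ⋃ j, Function.update X i Y j ⊆ (⋃ j, X j) ∪ Y :=
  Set.iUnion_subset <| (Function.forall_update_iff X fun _ E ↦ E ⊆ (⋃ j, X j) ∪ Y).2
    ⟨Set.subset_union_right, fun j _ ↦ Set.subset_union_of_subset_left (Set.subset_iUnion X j) Y⟩

theorem iUnion_update_of_eq_empty (hX : X i = ∅) :
    ⋃ j, Function.update X i Y j = (⋃ j, X j) ∪ Y :=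
  iUnion_update_subset.antisymm <| Set.union_subset
    (Set.iUnion_mono (le_update_iff.2 ⟨hX.trans_subset (Set.empty_subset Y), fun _ _ ↦ le_rfl⟩))
    subset_iUnion_update

namespace IsHaven

variable (hβ : IsHaven G k β)
include hβ

theorem nonempty (hS : S.ncard ≤ k) : (β S).Nonempty :=
  (hβ.isComponentIn S hS).nonempty

theorem disjoint (hS : S.ncard ≤ k) : Disjoint S (β S) :=
  (Set.subset_compl_iff_disjoint_left.1 (hβ.isComponentIn S hS).subset)

theorem subset_of_forall_adj {W : Set V} (hS : S.ncard ≤ k) (hne : (β S ∩ W).Nonempty)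
    (hW : ∀ a ∈ W, ∀ b ∈ β S, G.Adj a b → b ∈ W) : β S ⊆ W :=
  subset_of_preconnected_of_forall_adj (hβ.isComponentIn S hS).connected.preconnected hne
    fun a ha ↦ hW a ha.2

end IsHaven

namespace IsPartialModel

theorem update (hM : IsPartialModel G β r C X) (hD : (G.induce D).Preconnected) (hYD : Y ⊆ D)
    (hY : Y.ncard ≤ r) (hDC : ∀ j ≠ i, Disjoint D (C j))
    (hsub : β (⋃ j, Function.update X i Y j) ⊆ β (⋃ j, X j))
    (hdisj : Disjoint D (β (⋃ j, Function.update X i Y j)))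
    (hadj : ∀ j ≠ i, SetAdj G (C j) (β (⋃ j, X j)) →
      SetAdj G D (β (⋃ j, Function.update X i Y j)) → SetAdj G D (C j)) :
    IsPartialModel G β r (Function.update C i D) (Function.update X i Y) where
  preconnected := (Function.forall_update_iff C fun _ E ↦ (G.induce E).Preconnected).2
    ⟨hD, fun j _ ↦ hM.preconnected j⟩
  disjoint j l hjl := by
    obtain rfl | hj := eq_or_ne j i
    · simpa [hjl.symm] using hDC l hjl.symm
    obtain rfl | hl := eq_or_ne l i
    · simpa [hj] using (hDC j hj).symm
    · simpa [hj, hl] using hM.disjoint j l hjl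
  adj j l hjl hj' hl' := by
    obtain rfl | hj := eq_or_ne j i
    · rw [Function.update_self] at hj' ⊢
      rw [Function.update_of_ne hjl.symm] at hl' ⊢
      exact hadj l hjl.symm (hl'.mono subset_rfl hsub) hj'
    rw [Function.update_of_ne hj] at hj' ⊢
    obtain rfl | hl := eq_or_ne l i
    · rw [Function.update_self] at hl' ⊢
      exact (hadj j hj (hj'.mono subset_rfl hsub) hl').symm
    · rw [Function.update_of_ne hl] at hl' ⊢
      exact hM.adj j l hjl (hj'.mono subset_rfl hsub) (hl'.mono subset_rfl hsub)
  subset j := by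
    obtain rfl | hj := eq_or_ne j i
    · simpa using hYD
    · simpa [hj] using hM.subset j
  ncard_le := (Function.forall_update_iff X fun _ E ↦ E.ncard ≤ r).2
    ⟨hY, fun j _ ↦ hM.ncard_le j⟩
  disjoint_flap := (Function.forall_update_iff C fun _ E ↦ Disjoint E _).2
    ⟨hdisj, fun j _ ↦ (hM.disjoint_flap j).mono_right hsub⟩

theorem isMinorOf_top (hM : IsPartialModel G β r C X)
    (hC : ∀ i, SetAdj G (C i) (β (⋃ j, X j))) : IsMinorOf (⊤ : SimpleGraph (Fin h)) G := by
  have hne (i) : (C i).Nonempty := (hC i).imp fun _ ↦ And.left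
  exact ⟨C, hne, fun i j ↦ hM.disjoint i j,
    fun i ↦ (SimpleGraph.connected_iff _).2 ⟨hM.preconnected i, (hne i).to_subtype⟩,
    fun i j hij ↦ hM.adj i j hij (hC i) (hC j)⟩

variable (hM : IsPartialModel G β r C X)
include hM

theorem ncard_iUnion_update_le (hY : Y.ncard ≤ r) :
    (⋃ j, Function.update X i Y j).ncard ≤ h * r :=
  ncard_iUnion_le ((Function.forall_update_iff X fun _ E ↦ E.ncard ≤ r).2
    ⟨hY, fun j _ ↦ hM.ncard_le j⟩)

theorem eq_empty_of_eq_empty (hC : C i = ∅) : X i = ∅ :=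
  Set.subset_eq_empty (hM.subset i) hC

variable (hβ : IsHaven G (h * r) β)
include hβ

theorem mem_flap_or_mem_of_adj (hY : Y.ncard ≤ r) {a b : V} (ha : a ∈ β (⋃ j, X j))
    (hb : b ∈ β (⋃ j, Function.update X i Y j)) (hab : G.Adj a b) :
    b ∈ β (⋃ j, X j) ∨ b ∈ X i := by
  refine or_iff_not_imp_left.2 fun hbB ↦ ?_
  have hbX : b ∈ ⋃ j, X j := by_contra fun hbX ↦
    hbB ((hβ.isComponentIn _ (ncard_iUnion_le hM.ncard_le)).mem_of_adj ha hbX hab)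
  obtain ⟨j, hj⟩ := Set.mem_iUnion.1 hbX
  obtain rfl | hji := eq_or_ne j i
  · exact hj
  · have hbU : b ∈ ⋃ j, Function.update X i Y j :=
      Set.mem_iUnion.2 ⟨j, by rwa [Function.update_of_ne hji]⟩
    exact absurd hb ((hβ.disjoint (hM.ncard_iUnion_update_le hY)).notMem_of_mem_left hbU)

theorem exists_eq_empty_of_not_setAdj (hi : ¬ SetAdj G (C i) (β (⋃ j, X j))) :
    ∃ C' X' : Fin h → Set V, IsPartialModel G β r C' X' ∧ C' i = ∅ ∧
      β (⋃ j, X' j) ⊆ β (⋃ j, X j) := by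
  have hY : (∅ : Set V).ncard ≤ r := by simp
  have hcard := hM.ncard_iUnion_update_le (i := i) hY
  have hcard' : (⋃ j, X j).ncard ≤ h * r := ncard_iUnion_le hM.ncard_le
  have hsub : β (⋃ j, Function.update X i ∅ j) ⊆ β (⋃ j, X j) := by
    have hanti : β (⋃ j, X j) ⊆ β (⋃ j, Function.update X i ∅ j) :=
      hβ.anti _ _ hcard' (iUnion_update_subset.trans_eq (Set.union_empty _))
    refine hβ.subset_of_forall_adj hcard
      ((hβ.nonempty hcard').mono (Set.subset_inter hanti subset_rfl)) fun a ha b hb hab ↦ ?_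
    exact (hM.mem_flap_or_mem_of_adj hβ hY ha hb hab).resolve_right
      fun hbX ↦ hi ⟨b, hM.subset i hbX, a, ha, hab.symm⟩
  exact ⟨_, _, hM.update (D := ∅) (fun a ↦ a.2.elim) subset_rfl hY
    (fun _ _ ↦ Set.empty_disjoint _) hsub (Set.empty_disjoint _)
    (fun _ _ _ ⟨_, ha, _⟩ ↦ ha.elim), by simp, hsub⟩

theorem exists_flap_ssubset_of_connected {T : Set V} (hC : C i = ∅) (hTB : T ⊆ β (⋃ j, X j))
    (hT : (G.induce T).Connected) (hTr : T.ncard ≤ r)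
    (hTC : ∀ j, SetAdj G (C j) (β (⋃ j, X j)) → SetAdj G T (C j)) :
    ∃ C' X' : Fin h → Set V, IsPartialModel G β r C' X' ∧ β (⋃ j, X' j) ⊂ β (⋃ j, X j) := by
  have hcard := hM.ncard_iUnion_update_le (i := i) hTr
  have hsub : β (⋃ j, Function.update X i T j) ⊆ β (⋃ j, X j) :=
    hβ.anti _ _ hcard <| by
      rw [iUnion_update_of_eq_empty (hM.eq_empty_of_eq_empty hC)]
      exact Set.subset_union_left
  have hdisj : Disjoint T (β (⋃ j, Function.update X i T j)) :=
    (hβ.disjoint hcard).mono_left subset_iUnion_update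
  obtain ⟨v, hv⟩ := Set.nonempty_coe_sort.1 hT.nonempty
  exact ⟨_, _, hM.update hT.preconnected subset_rfl hTr
    (fun j _ ↦ (hM.disjoint_flap j).symm.mono_left hTB) hsub hdisj fun j _ hj _ ↦ hTC j hj,
    hsub.ssubset_of_mem_notMem (hTB hv) (hdisj.notMem_of_mem_left hv)⟩

/-- An edge of the new flap leading out of the old flap without `D` ends in the component `D` and
hence starts in the flap of `(⋃ j, X j) ∪ Z`. But that flap is separated from `D` by `Z` and has no
neighbours in `C i`. -/
theorem flap_update_subset_diff (hS : ((⋃ j, X j) ∪ Z).ncard ≤ h * r) (hZD : (Z ∩ D).ncard ≤ r)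
    (hCZ : ¬ SetAdj G (C i) (β ((⋃ j, X j) ∪ Z))) (hCD : C i ⊆ D)
    (hD : IsComponentIn G (C i ∪ β (⋃ j, X j) \ β ((⋃ j, X j) ∪ Z)) D) :
    β (⋃ j, Function.update X i (Z ∩ D) j) ⊆ β (⋃ j, X j) \ D := by
  set B := β (⋃ j, X j)
  set B₁ := β ((⋃ j, X j) ∪ Z)
  have hBX : Disjoint (⋃ j, X j) B := hβ.disjoint (ncard_iUnion_le hM.ncard_le)
  have hB₁B : B₁ ⊆ B := hβ.anti _ _ hS Set.subset_union_left
  have hB₁D : Disjoint D B₁ := Disjoint.mono_left hD.subset <|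
    Set.disjoint_union_left.2 ⟨(hM.disjoint_flap i).mono_right hB₁B, Set.disjoint_sdiff_left⟩
  have hcard := hM.ncard_iUnion_update_le (i := i) hZD
  have hB₁B' : B₁ ⊆ β (⋃ j, Function.update X i (Z ∩ D) j) :=
    hβ.anti _ _ hS (iUnion_update_subset.trans
      (Set.union_subset_union_right _ Set.inter_subset_left))
  refine hβ.subset_of_forall_adj hcard ((hβ.nonempty hS).mono
    (Set.subset_inter hB₁B' (Set.subset_sdiff.2 ⟨hB₁B, hB₁D.symm⟩))) fun a ha b hb hab ↦ ?_
  have haB₁ (hbD : b ∈ D) : a ∈ B₁ := by_contra fun haB₁ ↦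
    ha.2 (hD.mem_of_adj hbD (Or.inr ⟨ha.1, haB₁⟩) hab.symm)
  obtain hbB | hbX := hM.mem_flap_or_mem_of_adj hβ hZD ha.1 hb hab
  · refine ⟨hbB, fun hbD ↦ hB₁D.notMem_of_mem_left hbD ?_⟩
    have hbZ : b ∉ Z := fun hbZ ↦
      (hβ.disjoint hcard).notMem_of_mem_left (subset_iUnion_update ⟨hbZ, hbD⟩) hb
    exact (hβ.isComponentIn _ hS).mem_of_adj (haB₁ hbD)
      (fun hbS ↦ hbS.elim (fun hbX ↦ hBX.notMem_of_mem_left hbX hbB) hbZ) hab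
  · have hbC : b ∈ C i := hM.subset i hbX
    exact absurd ⟨b, hbC, a, haB₁ (hCD hbC), hab.symm⟩ hCZ

theorem exists_flap_ssubset_of_cut [Finite V] (hS : ((⋃ j, X j) ∪ Z).ncard ≤ h * r)
    (hZ : Z.ncard ≤ r) (hC : SetAdj G (C i) (β (⋃ j, X j)))
    (hCZ : ¬ SetAdj G (C i) (β ((⋃ j, X j) ∪ Z))) :
    ∃ C' X' : Fin h → Set V, IsPartialModel G β r C' X' ∧ β (⋃ j, X' j) ⊂ β (⋃ j, X j) := by
  have ⟨c, hcC, b, hbB, hcb⟩ := hC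
  obtain ⟨D, hCD, hD⟩ :=
    exists_isComponentIn_ge (W := C i ∪ β (⋃ j, X j) \ β ((⋃ j, X j) ∪ Z)) Set.subset_union_left
      ((SimpleGraph.connected_iff _).2 ⟨hM.preconnected i, ⟨c, hcC⟩⟩)
  have hZD : (Z ∩ D).ncard ≤ r := (Set.ncard_le_ncard Set.inter_subset_left).trans hZ
  have hB'D := hM.flap_update_subset_diff hβ hS hZD hCZ hCD hD
  have hsub := hB'D.trans Set.sdiff_subset
  have hDC (j) (hj : j ≠ i) : Disjoint D (C j) :=
    Disjoint.mono_left hD.subset <| Set.disjoint_union_left.2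
      ⟨hM.disjoint i j hj.symm, (hM.disjoint_flap j).symm.mono_left Set.sdiff_subset⟩
  have hbD : b ∈ D :=
    hD.mem_of_adj (hCD hcC) (Or.inr ⟨hbB, fun hb ↦ hCZ ⟨c, hcC, b, hb, hcb⟩⟩) hcb
  exact ⟨_, _, hM.update hD.connected.preconnected Set.inter_subset_right hZD hDC hsub
    (Set.subset_sdiff.1 hB'D).2.symm
    fun j hj hCj _ ↦ (hM.adj i j hj.symm hC hCj).mono hCD subset_rfl,
    hsub.ssubset_of_mem_notMem hbB fun hb ↦ (hB'D hb).2 hbD⟩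

theorem exists_flap_ssubset_of_eq_empty [Finite V] (hr : h * Nat.card V ≤ r * r)
    (hC : C i = ∅) :
    ∃ C' X' : Fin h → Set V, IsPartialModel G β r C' X' ∧ β (⋃ j, X' j) ⊂ β (⋃ j, X j) := by
  set B := β (⋃ j, X j)
  have hBne : B.Nonempty := hβ.nonempty (ncard_iUnion_le hM.ncard_le)
  have hrpos : 0 < r := by
    have : Nonempty V := hBne.to_subtype.map Subtype.val
    exact Nat.pos_of_mul_pos_left ((Nat.mul_pos i.pos Nat.card_pos).trans_le hr)
  have hBr : h * B.ncard ≤ r * r := (Nat.mul_le_mul_left h (Set.ncard_le_card B)).trans hr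
  -- A set without neighbours in `B` imposes no condition on the tree, so its target is all of `B`.
  obtain ⟨T, hTB, hT, hTr, hTA⟩ | ⟨Z, hZ, hZA⟩ := exists_connected_or_cut (G := G)
    (A := fun j ↦ {b ∈ B | SetAdj G (C j) B → ∃ c ∈ C j, G.Adj c b}) B.toFinite hrpos hBr
  · refine hM.exists_flap_ssubset_of_connected hβ hC hTB hT hTr fun j hj ↦ ?_
    obtain ⟨b, hbT, -, hb⟩ := hTA j
    obtain ⟨c, hc, hcb⟩ := hb hj
    exact ⟨b, hbT, c, hc, hcb.symm⟩
  · have hS : ((⋃ j, X j) ∪ Z).ncard ≤ h * r := by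
      rw [← iUnion_update_of_eq_empty (hM.eq_empty_of_eq_empty hC)]
      exact hM.ncard_iUnion_update_le hZ
    have hB₁ := hβ.isComponentIn _ hS
    have hB₁B : β ((⋃ j, X j) ∪ Z) ⊆ B := hβ.anti _ _ hS Set.subset_union_left
    obtain ⟨j, hj⟩ := hZA _ (Set.subset_sdiff.2 ⟨hB₁B,
      (hβ.disjoint hS).symm.mono_right Set.subset_union_right⟩) hB₁.connected
    refine hM.exists_flap_ssubset_of_cut (i := j) hβ hS hZ ?_ ?_
    · by_contra hCj
      obtain ⟨b, hb⟩ := hB₁.nonempty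
      exact hj.notMem_of_mem_left hb ⟨hB₁B hb, fun hCj' ↦ absurd hCj' hCj⟩
    · rintro ⟨c, hc, b, hb, hcb⟩
      exact hj.notMem_of_mem_left hb ⟨hB₁B hb, fun _ ↦ ⟨c, hc, hcb⟩⟩

theorem exists_flap_ssubset [Finite V] (hr : h * Nat.card V ≤ r * r)
    (hi : ¬ SetAdj G (C i) (β (⋃ j, X j))) :
    ∃ C' X' : Fin h → Set V, IsPartialModel G β r C' X' ∧ β (⋃ j, X' j) ⊂ β (⋃ j, X j) := by
  obtain ⟨C', X', hM', hC', hsub⟩ := hM.exists_eq_empty_of_not_setAdj hβ hi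
  obtain ⟨C'', X'', hM'', hlt⟩ := hM'.exists_flap_ssubset_of_eq_empty hβ hr hC'
  exact ⟨C'', X'', hM'', hlt.trans_subset hsub⟩

end IsPartialModel

theorem isPartialModel_empty : IsPartialModel G β r (fun _ : Fin h ↦ ∅) fun _ ↦ ∅ where
  preconnected _ a := a.2.elim
  disjoint _ _ _ := Set.empty_disjoint _
  adj _ _ _ := fun ⟨_, ha, _⟩ ↦ ha.elim
  subset _ := subset_rfl
  ncard_le _ := by simp
  disjoint_flap _ := Set.empty_disjoint _

theorem IsHaven.isMinorOf_top [Finite V] (hβ : IsHaven G (h * r) β)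
    (hr : h * Nat.card V ≤ r * r) : IsMinorOf (⊤ : SimpleGraph (Fin h)) G := by
  obtain ⟨B, ⟨C, X, hM, rfl⟩, hmin⟩ := WellFounded.has_min (wellFounded_lt (α := Set V))
    {B | ∃ C X : Fin h → Set V, IsPartialModel G β r C X ∧ β (⋃ j, X j) = B}
    ⟨_, _, _, isPartialModel_empty, rfl⟩
  refine hM.isMinorOf_top fun i ↦ by_contra fun hi ↦ ?_
  obtain ⟨C', X', hM', hlt⟩ := hM.exists_flap_ssubset hβ hr hi
  exact hmin _ ⟨C', X', hM', rfl⟩ hlt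

end Havens

section IntersectingFamilies

variable {h : ℕ} [Finite V]

theorem exists_isHaven_of_intersecting {k : ℕ} {𝒜 : Set (Set V)} (h𝒜 : 𝒜.Intersecting)
    (h𝒜k : ∀ S : Set V, S.ncard ≤ k → ∃ D ∈ 𝒜, D ⊆ Sᶜ ∧ (G.induce D).Connected) :
    ∃ β, IsHaven G k β := by
  have hcomp (S : Set V) (hS : S.ncard ≤ k) : ∃ B, IsComponentIn G Sᶜ B ∧ ∃ D ∈ 𝒜, D ⊆ B := by
    obtain ⟨D, hD, hDS, hDconn⟩ := h𝒜k S hS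
    obtain ⟨B, hDB, hB⟩ := exists_isComponentIn_ge hDS hDconn
    exact ⟨B, hB, D, hD, hDB⟩
  choose! β hβ hβ𝒜 using hcomp
  refine ⟨β, hβ, fun S T hT hST ↦ ?_⟩
  have hS : S.ncard ≤ k := (Set.ncard_le_ncard hST).trans hT
  obtain ⟨D, hD, hDS⟩ := hβ𝒜 S hS
  obtain ⟨E, hE, hET⟩ := hβ𝒜 T hT
  exact (hβ S hS).subset_of_connected ((hβ T hT).subset.trans (Set.compl_subset_compl.2 hST))
    (hβ T hT).connected ((Set.not_disjoint_iff_nonempty_inter.1 (h𝒜 hD hE)).mono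
      (Set.inter_subset_inter hDS hET))

theorem exists_forall_not_connected_of_intersecting {r : ℕ}
    (hG : MinorFree (⊤ : SimpleGraph (Fin h)) G) (hr : h * Nat.card V ≤ r * r)
    {𝒜 : Set (Set V)} (h𝒜 : 𝒜.Intersecting) :
    ∃ S : Set V, S.ncard ≤ h * r ∧ ∀ D ∈ 𝒜, D ⊆ Sᶜ → ¬ (G.induce D).Connected := by
  by_contra! hS
  obtain ⟨β, hβ⟩ := exists_isHaven_of_intersecting h𝒜 hS
  exact hG (hβ.isMinorOf_top hr)

end IntersectingFamilies

section Separators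

open MeasureTheory

variable {h : ℕ} [MeasurableSpace V] {μ : Measure V}

/-- Removing `S` leaves no connected set, equivalently no component, of weight more than `b`. -/
def IsSeparator (G : SimpleGraph V) (μ : Measure V) (b : ℝ) (S : Set V) : Prop :=
  ∀ D ⊆ Sᶜ, (G.induce D).Connected → μ.real D ≤ b

/-- Every set `U` of vertices can be split into connected sets of at most half its weight by
removing at most `κ * √|U|` vertices. -/
def HasSqrtSeparators (G : SimpleGraph V) (μ : Measure V) (κ : ℝ) : Prop :=
  ∀ U : Set V, ∃ Q : Set V, (Q.ncard : ℝ) ≤ κ * √U.ncard ∧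
    ∀ D ⊆ U \ Q, (G.induce D).Connected → μ.real D ≤ μ.real U / 2

theorem intersecting_setOf_half_lt [DiscreteMeasurableSpace V] [IsFiniteMeasure μ] (U : Set V) :
    {D : Set U | μ.real U / 2 < μ.real (Subtype.val '' D)}.Intersecting := by
  intro D hD E hE hDE
  have hlt : μ.real U < μ.real (Subtype.val '' D) + μ.real (Subtype.val '' E) := by
    linarith [hD.out, hE.out]
  exact Set.not_disjoint_iff_nonempty_inter.2
    (nonempty_inter_of_measureReal_lt_add .of_discrete (Subtype.coe_image_subset U D)
      (Subtype.coe_image_subset U E) hlt)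
    ((Set.disjoint_image_iff Subtype.val_injective).2 hDE)

variable [Finite V] [DiscreteMeasurableSpace V]

theorem exists_nat_le_sq_and_le_two_mul_sqrt (n : ℕ) : ∃ r : ℕ, n ≤ r * r ∧ (r : ℝ) ≤ 2 * √n := by
  obtain rfl | hn := n.eq_zero_or_pos
  · exact ⟨0, by simp⟩
  have hsqrt : 1 ≤ √(n : ℝ) := Real.one_le_sqrt.2 (by exact_mod_cast hn)
  refine ⟨⌈√(n : ℝ)⌉₊, ?_, Nat.ceil_le_two_mul (by linarith)⟩
  have : (n : ℝ) ≤ ⌈√(n : ℝ)⌉₊ * ⌈√(n : ℝ)⌉₊ :=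
    calc (n : ℝ) = √n * √n := (Real.mul_self_sqrt n.cast_nonneg).symm
      _ ≤ _ := mul_self_le_mul_self (Real.sqrt_nonneg _) (Nat.le_ceil _)
  exact_mod_cast this

theorem hasSqrtSeparators_of_minorFree [IsFiniteMeasure μ]
    (hG : MinorFree (⊤ : SimpleGraph (Fin h)) G) : HasSqrtSeparators G μ (2 * (h * √h)) := by
  intro U
  obtain ⟨r, hUr, hr⟩ := exists_nat_le_sq_and_le_two_mul_sqrt (h * U.ncard)
  obtain ⟨S, hS, hSD⟩ := exists_forall_not_connected_of_intersecting (G := G.induce U)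
    (fun hH ↦ hG (isMinorOf_of_induce hH)) hUr (intersecting_setOf_half_lt (μ := μ) U)
  refine ⟨Subtype.val '' S, ?_, fun D hD hDconn ↦ ?_⟩
  · calc ((Subtype.val '' S).ncard : ℝ) = S.ncard := by
          rw [Set.ncard_image_of_injective S Subtype.val_injective]
      _ ≤ h * r := by exact_mod_cast hS
      _ ≤ h * (2 * √(h * U.ncard : ℕ)) := by gcongr
      _ = 2 * (h * √h) * √U.ncard := by
          rw [Nat.cast_mul, Real.sqrt_mul h.cast_nonneg]; ring
  · have hval : Subtype.val '' (Subtype.val ⁻¹' D : Set U) = D := by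
      simpa using hD.trans Set.sdiff_subset
    refine not_lt.1 fun hlt ↦ hSD (Subtype.val ⁻¹' D) (by rwa [Set.mem_ofPred, hval]) ?_
      (connected_induce_induce_iff.2 (hval.symm ▸ hDconn))
    exact fun v hv hvS ↦ (hD hv).2 ⟨v, hvS, rfl⟩

theorem sum_sqrt_ncard_le [IsProbabilityMeasure μ] {γ : ℝ} (hγ : 0 < γ) {F : Finset (Set V)}
    (hF : (F : Set (Set V)).PairwiseDisjoint id) (hFγ : ∀ C ∈ F, γ ≤ μ.real C) :
    ∑ C ∈ F, √(C.ncard : ℝ) ≤ √(Nat.card V / γ) := by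
  have hmeas : ∀ C ∈ F, MeasurableSet (id C) := fun _ _ ↦ .of_discrete
  have hcard : (F.card : ℝ) ≤ 1 / γ := by
    rw [le_div_iff₀ hγ, ← nsmul_eq_mul]
    exact (F.card_nsmul_le_sum _ γ hFγ).trans
      ((sum_measureReal_le_measureReal_univ hmeas hF).trans_eq probReal_univ)
  have hsum : ∑ C ∈ F, (C.ncard : ℝ) ≤ Nat.card V := by
    have hcount (C : Set V) : Measure.count.real C = C.ncard := by
      rw [Measure.real, Measure.count_apply .of_discrete, ← C.toFinite.cast_ncard_eq,
        ENat.toENNReal_coe, ENNReal.toReal_natCast]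
    simpa [hcount] using sum_measureReal_le_measureReal_univ (μ := Measure.count) hmeas hF
  calc ∑ C ∈ F, √(C.ncard : ℝ) = ∑ C ∈ F, √1 * √(C.ncard : ℝ) := by simp
    _ ≤ √(∑ _C ∈ F, 1) * √(∑ C ∈ F, (C.ncard : ℝ)) :=
        Real.sum_sqrt_mul_sqrt_le F (fun _ ↦ zero_le_one) fun _ ↦ Nat.cast_nonneg _
    _ ≤ √(1 / γ) * √(Nat.card V) := by
        gcongr; simpa using hcard
    _ = √(Nat.card V / γ) := by rw [← Real.sqrt_mul (by positivity)]; ring_nf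

theorem HasSqrtSeparators.exists_isSeparator_of_two_mul [IsProbabilityMeasure μ] {κ γ : ℝ}
    (hκ : 0 ≤ κ) (hμ : HasSqrtSeparators G μ κ) (hγ : 0 < γ) {S : Set V}
    (hS : IsSeparator G μ (2 * γ) S) :
    ∃ S' : Set V, (S'.ncard : ℝ) ≤ S.ncard + κ * √(Nat.card V / γ) ∧ IsSeparator G μ γ S' := by
  classical
  choose Q hQcard hQ using hμ
  let F : Finset (Set V) :=
    (Set.toFinite {C | IsComponentIn G Sᶜ C ∧ γ < μ.real C}).toFinset
  have hF {C : Set V} : C ∈ F ↔ IsComponentIn G Sᶜ C ∧ γ < μ.real C := Set.Finite.mem_toFinset _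
  have hdisj : (F : Set (Set V)).PairwiseDisjoint id := fun C hC C' hC' hne ↦
    ((hF.1 hC).1.eq_or_disjoint (hF.1 hC').1).resolve_left hne
  refine ⟨S ∪ ⋃ C ∈ F, Q C, ?_, fun D hD hDconn ↦ ?_⟩
  · calc ((S ∪ ⋃ C ∈ F, Q C).ncard : ℝ) ≤ S.ncard + ∑ C ∈ F, ((Q C).ncard : ℝ) := by
          exact_mod_cast (Set.ncard_union_le _ _).trans
            (Nat.add_le_add_left (F.set_ncard_biUnion_le Q) _)
      _ ≤ S.ncard + ∑ C ∈ F, κ * √C.ncard := by gcongr; exact hQcard _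
      _ ≤ S.ncard + κ * √(Nat.card V / γ) := by
          rw [← Finset.mul_sum]
          gcongr
          exact sum_sqrt_ncard_le hγ hdisj fun C hC ↦ (hF.1 hC).2.le
  · rw [Set.compl_union, Set.subset_inter_iff] at hD
    obtain ⟨C, hDC, hC⟩ := exists_isComponentIn_ge hD.1 hDconn
    obtain hCγ | hCγ := le_or_gt (μ.real C) γ
    · exact (measureReal_mono hDC).trans hCγ
    have hDQ : D ⊆ C \ Q C := fun v hv ↦
      ⟨hDC hv, fun hvQ ↦ hD.2 hv (Set.mem_biUnion (hF.2 ⟨hC, hCγ⟩) hvQ)⟩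
    linarith [hQ C D hDQ hDconn, hS C hC.subset hC.connected]

theorem HasSqrtSeparators.exists_isSeparator_one_div_two_pow [IsProbabilityMeasure μ] {κ : ℝ}
    (hκ : 0 ≤ κ) (hμ : HasSqrtSeparators G μ κ) (i : ℕ) :
    ∃ S : Set V, (S.ncard : ℝ) ≤ 4 * κ * √(Nat.card V) * √(2 ^ i) ∧
      IsSeparator G μ (1 / 2 ^ i) S := by
  induction i with
  | zero => exact ⟨∅, by rw [Set.ncard_empty, Nat.cast_zero]; positivity, fun D _ _ ↦ by simp⟩
  | succ i ih =>
    obtain ⟨S, hScard, hS⟩ := ih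
    have hlevel : (1 : ℝ) / 2 ^ i = 2 * (1 / 2 ^ (i + 1)) := by field_simp; ring
    obtain ⟨S', hS'card, hS'⟩ :=
      hμ.exists_isSeparator_of_two_mul hκ (by positivity) (hlevel ▸ hS)
    refine ⟨S', hS'card.trans ?_, hS'⟩
    have hsqrt : √((2 : ℝ) ^ (i + 1)) = √2 * √(2 ^ i) := by
      rw [pow_succ', Real.sqrt_mul zero_le_two]
    -- `4` may be any constant `c` with `c + √2 ≤ c * √2`.
    have hsqrt_two : 4 + √(2 : ℝ) ≤ 4 * √2 := by
      linarith [(Real.le_sqrt' (x := 4 / 3) (y := 2) (by norm_num)).2 (by norm_num)]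
    calc (S.ncard : ℝ) + κ * √(Nat.card V / (1 / 2 ^ (i + 1)))
        ≤ 4 * κ * √(Nat.card V) * √(2 ^ i) + κ * (√(Nat.card V) * √(2 ^ (i + 1))) := by
          rw [div_div_eq_mul_div, div_one, Real.sqrt_mul (Nat.cast_nonneg _)]
          gcongr
      _ = κ * √(Nat.card V) * √(2 ^ i) * (4 + √2) := by rw [hsqrt]; ring
      _ ≤ κ * √(Nat.card V) * √(2 ^ i) * (4 * √2) := by gcongr
      _ = 4 * κ * √(Nat.card V) * √(2 ^ (i + 1)) := by rw [hsqrt]; ring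

theorem HasSqrtSeparators.exists_isSeparator [IsProbabilityMeasure μ] {κ b : ℝ}
    (hκ : 0 ≤ κ) (hμ : HasSqrtSeparators G μ κ) (hb : b ∈ Set.Ioc (0 : ℝ) 1) :
    ∃ S : Set V, (S.ncard : ℝ) ≤ 8 * κ * √(Nat.card V) / √b ∧ IsSeparator G μ b S := by
  obtain ⟨hb₀, hb₁⟩ := hb
  obtain ⟨i, hi, hi'⟩ := exists_nat_pow_near ((one_le_div hb₀).2 hb₁) (one_lt_two (α := ℝ))
  obtain ⟨S, hScard, hS⟩ := hμ.exists_isSeparator_one_div_two_pow hκ (i + 1)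
  have hsqrt : √((2 : ℝ) ^ (i + 1)) ≤ 2 / √b :=
    calc √((2 : ℝ) ^ (i + 1)) ≤ √(2 ^ 2 / b) := by
          gcongr
          rw [pow_succ']
          calc 2 * 2 ^ i ≤ 2 * (1 / b) := by gcongr
            _ ≤ 2 ^ 2 / b := by rw [mul_one_div]; gcongr; norm_num
      _ = 2 / √b := by rw [Real.sqrt_div (by norm_num), Real.sqrt_sq zero_le_two]
  refine ⟨S, hScard.trans ?_, fun D hD hDconn ↦ (hS D hD hDconn).trans
    ((one_div_lt (by positivity) hb₀).2 hi').le⟩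
  calc 4 * κ * √(Nat.card V) * √(2 ^ (i + 1)) ≤ 4 * κ * √(Nat.card V) * (2 / √b) := by gcongr
    _ = 8 * κ * √(Nat.card V) / √b := by ring

end Separators

section Weights

open MeasureTheory

variable {ι : Type*} [Fintype ι] [MeasurableSpace ι] [DiscreteMeasurableSpace ι]

theorem exists_isProbabilityMeasure_real_eq_sum {w : ι → ℝ} (hw : ∀ v, 0 ≤ w v)
    (hw_sum : ∑ v, w v = 1) :
    ∃ μ : Measure ι, IsProbabilityMeasure μ ∧ ∀ s : Finset ι, μ.real s = ∑ v ∈ s, w v := by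
  have hsum : ∑ v, ENNReal.ofReal (w v) = 1 := by
    rw [← ENNReal.ofReal_sum_of_nonneg fun v _ ↦ hw v, hw_sum, ENNReal.ofReal_one]
  let p : PMF ι := PMF.ofFintype (fun v ↦ ENNReal.ofReal (w v)) hsum
  refine ⟨p.toMeasure, inferInstance, fun s ↦ ?_⟩
  rw [Measure.real, p.toMeasure_apply_finset, ENNReal.toReal_sum fun v _ ↦ p.apply_ne_top v]
  exact Finset.sum_congr rfl fun v _ ↦ ENNReal.toReal_ofReal (hw v)

end Weights

theorem rpow_three_halves {x : ℝ} (hx : 0 ≤ x) : x ^ ((3 : ℝ) / 2) = x * √x := by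
  rw [Real.sqrt_eq_rpow, ← Real.rpow_one_add' hx (by norm_num)]
  norm_num

end MinorSeparator

/-- [Alon–Seymour–Thomas] There is an absolute constant `c > 0` such that for every `h ≥ 1`,
every finite simple `K_h`-minor-free graph `G = (V,E)` and every system of nonnegative vertex
weights summing to `1`, and every `β ∈ (0,1]`, there is a set `S ⊆ V` with
`|S| ≤ c · h^{3/2} · |V|^{1/2} / β^{1/2}` whose removal leaves no connected component of
total weight greater than `β`. -/
theorem separator_of_Kh_minorFree :
    ∃ c : ℝ, 0 < c ∧
      ∀ (h : ℕ), 1 ≤ h →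
      ∀ (V : Type) [Fintype V] (G : SimpleGraph V),
        MinorFree (⊤ : SimpleGraph (Fin h)) G →
        ∀ w : V → ℝ, (∀ v, 0 ≤ w v) → (∑ v, w v) = 1 →
        ∀ β : ℝ, β ∈ Set.Ioc (0 : ℝ) 1 →
        ∃ S : Finset V,
          (S.card : ℝ) ≤
              c * (h : ℝ) ^ ((3 : ℝ) / 2) * (Fintype.card V : ℝ) ^ ((1 : ℝ) / 2)
                / β ^ ((1 : ℝ) / 2) ∧
          ∀ C : (G.induce ((↑S : Set V)ᶜ)).ConnectedComponent,
            ∑ v ∈ (Set.toFinite C.supp).toFinset, w ↑v ≤ β := by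
  refine ⟨16, by norm_num, fun h _ V _ G hG w hw hw_sum β hβ ↦ ?_⟩
  let _ : MeasurableSpace V := ⊤
  obtain ⟨μ, _, hμ⟩ := MinorSeparator.exists_isProbabilityMeasure_real_eq_sum hw hw_sum
  obtain ⟨S, hScard, hS⟩ := (MinorSeparator.hasSqrtSeparators_of_minorFree (μ := μ) hG
    ).exists_isSeparator (by positivity) hβ
  lift S to Finset V using S.toFinite
  refine ⟨S, ?_, fun C ↦ ?_⟩
  · rw [MinorSeparator.rpow_three_halves h.cast_nonneg, ← Real.sqrt_eq_rpow, ← Real.sqrt_eq_rpow,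
      ← Nat.card_eq_fintype_card, ← Set.ncard_coe_finset]
    exact hScard.trans_eq (by ring)
  · have hC := MinorSeparator.connected_induce_induce_iff.1 C.maximal_connected_induce_supp.prop
    calc ∑ v ∈ C.supp.toFinite.toFinset, w v
        = μ.real (C.supp.toFinite.toFinset.map (.subtype _)) := by rw [hμ, Finset.sum_map]; rfl
      _ = μ.real (Subtype.val '' C.supp) := by simp
      _ ≤ β := hS _ (Subtype.coe_image_subset _ C.supp) hC
end

section
/- Let G = (V, E) be a finite simple graph with edge weights w : E → ℝ≥0, and suppose E can be partitioned into c ≥ 1 classes each of which is the edge set of a forest (acyclic spanning subgraph). For each vertex v let m(v) be the maximum of w(e) over edges e incident to v (with m(v) = 0 if v is isolated). Then Σ_{v ∈ V} m(v) ≥ (Σ_{e ∈ E} w(e)) / c. -/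
/-!
Root every component of a forest and let each edge `e` choose its endpoint farther from the root. A
vertex is chosen only by the edge to its parent, so the choice is injective; as `w e` is at most the
value of `m` at the chosen vertex, each of the `c` forests has total weight at most `∑ v, m v`.
-/

section Forest

variable {V : Type*} {F : SimpleGraph V}

theorem snd_eq_or_snd_eq_of_adj (hF : F.IsAcyclic) {a b r : V} (hab : F.Adj a b)
    {p : F.Walk a r} (hp : p.IsPath) {q : F.Walk b r} (hq : q.IsPath) :
    p.snd = b ∨ q.snd = a := by
  by_cases hb : b ∈ p.support
  · exact .inl (hF.eq_snd_of_adj_start hp hab hb).symm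
  · have hq_eq : q = .cons hab.symm p :=
      congrArg Subtype.val
        ((hF.subsingleton_path b r).elim ⟨q, hq⟩ ⟨_, hp.cons hb⟩)
    exact .inr (by rw [hq_eq, SimpleGraph.Walk.snd_cons])

theorem exists_parent_toward_of_isAcyclic (hF : F.IsAcyclic) (r : V) :
    ∃ parent : V → V, ∀ a b, F.Adj a b → F.Reachable a r → parent a = b ∨ parent b = a := by
  have exists_snd (v : V) : ∃ x, F.Reachable v r → ∃ p : F.Walk v r, p.IsPath ∧ p.snd = x := by
    by_cases hv : F.Reachable v r
    · obtain ⟨p, hp⟩ := hv.exists_isPath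
      exact ⟨p.snd, fun _ => ⟨p, hp, rfl⟩⟩
    · exact ⟨v, fun h => absurd h hv⟩
  choose parent hparent using exists_snd
  refine ⟨parent, fun a b hab har => ?_⟩
  obtain ⟨p, hp, hpa⟩ := hparent a har
  obtain ⟨q, hq, hqb⟩ := hparent b (hab.symm.reachable.trans har)
  rw [← hpa, ← hqb]
  exact snd_eq_or_snd_eq_of_adj hF hab hp hq

theorem exists_parent_of_isAcyclic (hF : F.IsAcyclic) :
    ∃ parent : V → V, ∀ a b, F.Adj a b → parent a = b ∨ parent b = a := by
  choose parent hparent using exists_parent_toward_of_isAcyclic hF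
  let root (v : V) : V := (F.connectedComponentMk v).out
  have reachable_root (v : V) : F.Reachable v (root v) :=
    (SimpleGraph.ConnectedComponent.exact (Quot.out_eq (F.connectedComponentMk v))).symm
  refine ⟨fun v => parent (root v) v, fun a b hab => ?_⟩
  have root_eq : root a = root b :=
    congrArg Quot.out (SimpleGraph.ConnectedComponent.connectedComponentMk_eq_of_adj hab)
  simpa only [root_eq] using hparent (root a) a b hab (reachable_root a)

theorem exists_injOn_endpoint_of_isAcyclic (hF : F.IsAcyclic) :
    ∃ endpoint : Sym2 V → V, Set.InjOn endpoint F.edgeSet ∧ ∀ e ∈ F.edgeSet, endpoint e ∈ e := by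
  obtain ⟨parent, hparent⟩ := exists_parent_of_isAcyclic hF
  have exists_child (e : Sym2 V) : ∃ v ∈ e, e ∈ F.edgeSet → e = s(v, parent v) := by
    induction e with | _ a b
    by_cases hab : F.Adj a b
    · rcases hparent a b hab with ha | hb
      · exact ⟨a, Sym2.mem_mk_left a b, fun _ => by rw [ha]⟩
      · exact ⟨b, Sym2.mem_mk_right a b, fun _ => by rw [hb, Sym2.eq_swap]⟩
    · exact ⟨a, Sym2.mem_mk_left a b, fun h => absurd h hab⟩
  choose child child_mem eq_child using exists_child
  refine ⟨child, fun e he e' he' h => ?_, fun e _ => child_mem e⟩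
  rw [eq_child e he, eq_child e' he', h]

end Forest

theorem nonneg_of_attained_or_empty {α R : Type*} [Zero R] [Preorder R] {s : Set α}
    {w : α → R} {x : R} (hw : ∀ e ∈ s, 0 ≤ w e) (hatt : s.Nonempty → ∃ e ∈ s, x = w e)
    (hempty : s = ∅ → x = 0) : 0 ≤ x := by
  rcases s.eq_empty_or_nonempty with hs | hs
  · exact (hempty hs).ge
  · obtain ⟨e, he, rfl⟩ := hatt hs
    exact hw e he

section Weights

variable {M : Type*} [AddCommMonoid M] [PartialOrder M] [IsOrderedAddMonoid M]

theorem sum_le_sum_of_injOn {ι κ : Type*} {s : Finset ι} {t : Finset κ} {g : ι → κ}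
    {w : ι → M} {m : κ → M} (hg : Set.InjOn g s) (hgt : Set.MapsTo g s t)
    (hwm : ∀ i ∈ s, w i ≤ m (g i)) (hm : ∀ k ∈ t, 0 ≤ m k) :
    ∑ i ∈ s, w i ≤ ∑ k ∈ t, m k := by
  classical
  calc ∑ i ∈ s, w i
      ≤ ∑ i ∈ s, m (g i) := Finset.sum_le_sum hwm
    _ = ∑ k ∈ s.image g, m k := (Finset.sum_image hg).symm
    _ ≤ ∑ k ∈ t, m k :=
        Finset.sum_le_sum_of_subset_of_nonneg (Finset.image_subset_iff.2 hgt) fun k hk _ => hm k hk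

variable {V : Type*} {w : Sym2 V → M} {m : V → M} {t : Finset V}

theorem sum_le_sum_of_isAcyclic {F : SimpleGraph V} (hF : F.IsAcyclic) {s : Finset (Sym2 V)}
    (hsF : ↑s ⊆ F.edgeSet) (hst : ∀ e ∈ s, ∀ v ∈ e, v ∈ t) (hwm : ∀ e ∈ s, ∀ v ∈ e, w e ≤ m v)
    (hm : ∀ v ∈ t, 0 ≤ m v) :
    ∑ e ∈ s, w e ≤ ∑ v ∈ t, m v := by
  obtain ⟨endpoint, hinj, hmem⟩ := exists_injOn_endpoint_of_isAcyclic hF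
  exact sum_le_sum_of_injOn (hinj.mono hsF) (fun e he => hst e he _ (hmem e (hsF he)))
    (fun e he => hwm e he _ (hmem e (hsF he))) hm

theorem sum_max_incident_weight_ge_general {G : SimpleGraph V} [Fintype G.edgeSet]
    {C : Type*} [Fintype C] {f : Sym2 V → C}
    (hforest : ∀ i, (SimpleGraph.fromEdgeSet {e | e ∈ G.edgeSet ∧ f e = i}).IsAcyclic)
    (ht : G.support ⊆ t) (hub : ∀ v, ∀ e ∈ G.incidenceSet v, w e ≤ m v)
    (hm : ∀ v ∈ t, 0 ≤ m v) :
    ∑ e ∈ G.edgeFinset, w e ≤ Fintype.card C • ∑ v ∈ t, m v := by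
  classical
  have endpoint_mem (e) (he : e ∈ G.edgeSet) (v) (hv : v ∈ e) : v ∈ t := by
    obtain ⟨u, rfl⟩ := Sym2.mem_iff_exists.1 hv
    exact ht ⟨u, he⟩
  have forest_le (i : C) : ∑ e ∈ G.edgeFinset with f e = i, w e ≤ ∑ v ∈ t, m v := by
    have mem_edgeSet {e} (he : e ∈ G.edgeFinset.filter (f · = i)) : e ∈ G.edgeSet :=
      SimpleGraph.mem_edgeFinset.1 (Finset.mem_filter.1 he).1
    refine sum_le_sum_of_isAcyclic (hforest i) (fun e he => ?_)
      (fun e he => endpoint_mem e (mem_edgeSet he))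
      (fun e he v hv => hub v e ⟨mem_edgeSet he, hv⟩) hm
    rw [SimpleGraph.edgeSet_fromEdgeSet]
    exact ⟨⟨mem_edgeSet he, (Finset.mem_filter.1 he).2⟩,
      G.not_isDiag_of_mem_edgeSet (mem_edgeSet he)⟩
  calc ∑ e ∈ G.edgeFinset, w e
      = ∑ i, ∑ e ∈ G.edgeFinset with f e = i, w e := (Finset.sum_fiberwise _ f w).symm
    _ ≤ Fintype.card C • ∑ v ∈ t, m v := Finset.sum_le_card_nsmul _ _ _ fun i _ => forest_le i

end Weights

/-- Let `G = (V,E)` be a finite simple graph with nonnegative edge weights `w` whose edge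
set is partitioned into `c ≥ 1` forests. For each vertex `v` let `m v` be the maximum of
`w e` over the edges `e` incident to `v` (with `m v = 0` for isolated `v`). Then
`∑_v m v ≥ (∑_{e ∈ E} w e) / c`. -/
theorem sum_max_incident_weight_ge
    (V : Type) [Fintype V] [DecidableEq V] (G : SimpleGraph V) [DecidableRel G.Adj]
    (w : Sym2 V → ℝ) (hw : ∀ e ∈ G.edgeSet, 0 ≤ w e)
    (c : ℕ) (hc : 1 ≤ c)
    (f : Sym2 V → Fin c)
    (hforest : ∀ i : Fin c,
      (SimpleGraph.fromEdgeSet {e | e ∈ G.edgeSet ∧ f e = i}).IsAcyclic)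
    (m : V → ℝ)
    (hub : ∀ v, ∀ e ∈ G.incidenceSet v, w e ≤ m v)
    (hatt : ∀ v, (G.incidenceSet v).Nonempty → ∃ e ∈ G.incidenceSet v, m v = w e)
    (hiso : ∀ v, G.incidenceSet v = ∅ → m v = 0) :
    (∑ e ∈ G.edgeFinset, w e) / c ≤ ∑ v, m v := by
  have hm (v : V) : 0 ≤ m v :=
    nonneg_of_attained_or_empty (fun e he => hw e he.1) (hatt v) (hiso v)
  rw [div_le_iff₀' (by exact_mod_cast hc)]
  simpa using sum_max_incident_weight_ge_general hforest (t := Finset.univ) (by simp) hub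
    fun v _ => hm v
end

section
/- Let G = (V, E) be a finite simple graph with edge weights w : E → ℝ≥0 whose edge set can be partitioned into c ≥ 1 classes each of which is the edge set of a forest. Let f : V → V be a function such that for every non-isolated vertex v, f(v) is adjacent to v and w({v, f(v)}) ≥ w(e) for every edge e incident to v (f(v) is a heaviest neighbor of v). Let (X_v)_{v ∈ V} be independent uniformly random Boolean variables (fair coin flips), and let D = { {v, f(v)} : v ∈ V non-isolated, X_v = true and X_{f(v)} = false } be the set of contracted edges. Then the expected total weight E[ Σ_{e ∈ D} w(e) ] is at least (Σ_{e ∈ E} w(e)) / (4c). -/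
/-!
Orient every forest of the partition towards a root of each of its trees, so that every vertex is
the tail of at most `c` edges. Charging each edge to the heaviest edge `s(v, f v)` at its tail `v`
shows that the edges weigh at most `c` times the sum of the weights `w s(v, f v)` over the
non-isolated vertices `v`. On the other hand, a vertex `v` selects its edge `s(v, f v)` with
probability `1/4`, and an edge is selected by at most one of its endpoints since the coins of the
two endpoints have to differ; so the expected contracted weight is exactly a quarter of that sum.
-/

open Finset

section CoinFlips

variable {ι α : Type*} [Fintype ι] [DecidableEq ι] [Fintype α] [DecidableEq α]

theorem card_filter_apply_eq_and_apply_eq_mul {i j : ι} (hij : i ≠ j) (a b : α) :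
    #{X : ι → α | X i = a ∧ X j = b} * Fintype.card α ^ 2 = Fintype.card α ^ Fintype.card ι := by
  have hbij : #{X : ι → α | X i = a ∧ X j = b} * #(univ : Finset (α × α)) =
      #(univ : Finset (ι → α)) := by
    rw [← card_product]
    refine card_nbij' (fun p ↦ Function.update (Function.update p.1 i p.2.1) j p.2.2)
      (fun X ↦ (Function.update (Function.update X i a) j b, X i, X j)) ?_ ?_ ?_ ?_
    · simp
    · simp [Set.MapsTo, hij]
    · rintro ⟨X, x, y⟩ hX
      obtain ⟨rfl, rfl⟩ : X i = a ∧ X j = b := by simpa using hX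
      simp [Function.update_comm hij, hij]
    · intro X _
      simp [Function.update_comm hij]
  simpa [sq] using hbij

end CoinFlips

section Orientation

variable {V : Type*}

theorem exists_parent_of_isAcyclic_s8 {H : SimpleGraph V} (hH : H.IsAcyclic) :
    ∃ parent : V → V, ∀ ⦃a b⦄, H.Adj a b → parent a = b ∨ parent b = a := by
  let root (v : V) : V := (H.connectedComponentMk v).out
  have hroot (v : V) : H.Reachable v (root v) :=
    (SimpleGraph.ConnectedComponent.exact (Quot.out_eq (H.connectedComponentMk v))).symm
  choose p hp using fun v ↦ (hroot v).exists_isPath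
  refine ⟨fun v ↦ (p v).snd, fun a b hab ↦ ?_⟩
  have hsame : root b = root a :=
    congrArg Quot.out (SimpleGraph.ConnectedComponent.sound hab.symm.reachable)
  obtain ⟨q, hq, hsnd⟩ : ∃ q : H.Walk b (root a), q.IsPath ∧ q.snd = (p b).snd :=
    ⟨(p b).copy rfl hsame, by simpa using hp b, by simp⟩
  change (p a).snd = b ∨ (p b).snd = a
  rw [← hsnd]
  by_cases ha : a ∈ q.support
  · exact .inr (hH.eq_snd_of_adj_start hq hab.symm ha).symm
  · have hcons : (q.cons hab).IsPath := hq.cons ha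
    have hpa : p a = q.cons hab :=
      congrArg Subtype.val ((hH.subsingleton_path _ _).elim ⟨p a, hp a⟩ ⟨_, hcons⟩)
    exact .inl (by rw [hpa, SimpleGraph.Walk.snd_cons])

theorem exists_injOn_tail_of_isAcyclic {H : SimpleGraph V} (hH : H.IsAcyclic) :
    ∃ tail : Sym2 V → V, (∀ e ∈ H.edgeSet, tail e ∈ e) ∧ Set.InjOn tail H.edgeSet := by
  obtain ⟨parent, hparent⟩ := exists_parent_of_isAcyclic_s8 hH
  have hedge (e : Sym2 V) : ∃ v, e ∈ H.edgeSet → e = s(v, parent v) := by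
    induction e with | _ a b
    by_cases hab : H.Adj a b
    · rcases hparent hab with rfl | rfl
      · exact ⟨a, fun _ ↦ rfl⟩
      · exact ⟨b, fun _ ↦ Sym2.eq_swap⟩
    · exact ⟨a, fun h ↦ absurd h hab⟩
  choose tail htail using hedge
  refine ⟨tail, fun e he ↦ ?_, fun e he e' he' heq ↦ ?_⟩
  · exact Sym2.mem_iff_exists.2 ⟨_, htail e he⟩
  · rw [htail e he, htail e' he', heq]

/-- `IsOrientation G c tail` says that `tail` chooses an endpoint of every edge of `G`, thereby
orienting the edge away from it, in such a way that all out-degrees are at most `c`.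
Such a `tail` exists exactly when the edges can be partitioned into `c` pseudoforests. -/
structure IsOrientation (G : SimpleGraph V) [Fintype G.edgeSet] [DecidableEq V] (c : ℕ)
    (tail : Sym2 V → V) : Prop where
  tail_mem : ∀ e ∈ G.edgeSet, tail e ∈ e
  outdegree_le : ∀ v, #{e ∈ G.edgeFinset | tail e = v} ≤ c

theorem exists_isOrientation_of_forest_partition (G : SimpleGraph V) [Fintype G.edgeSet]
    [DecidableEq V] {ι : Type*} [Fintype ι] {part : Sym2 V → ι}
    (hforest : ∀ i, (SimpleGraph.fromEdgeSet {e | e ∈ G.edgeSet ∧ part e = i}).IsAcyclic) :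
    ∃ tail, IsOrientation G (Fintype.card ι) tail := by
  have hclass {e : Sym2 V} (he : e ∈ G.edgeSet) :
      e ∈ (SimpleGraph.fromEdgeSet {e' | e' ∈ G.edgeSet ∧ part e' = part e}).edgeSet := by
    simpa [SimpleGraph.edgeSet_fromEdgeSet, he] using G.not_isDiag_of_mem_edgeSet he
  choose tail htail hinj using fun i ↦ exists_injOn_tail_of_isAcyclic (hforest i)
  refine ⟨fun e ↦ tail (part e) e, fun e he ↦ htail _ e (hclass he), fun v ↦ ?_⟩
  refine card_le_card_of_injOn part (fun _ _ ↦ mem_univ _) fun e he e' he' hpart ↦ ?_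
  obtain ⟨he, hev⟩ : e ∈ G.edgeSet ∧ tail (part e) e = v := by simpa using he
  obtain ⟨he', hev'⟩ : e' ∈ G.edgeSet ∧ tail (part e') e' = v := by simpa using he'
  rw [← hpart] at hev'
  exact hinj (part e) (hclass he) (hpart ▸ hclass he') (hev.trans hev'.symm)

end Orientation

section Contraction

variable {V K : Type*}

theorem injOn_edge_of_true_of_false (f : V → V) (X : V → Bool) :
    Set.InjOn (fun v ↦ s(v, f v)) {v | X v = true ∧ X (f v) = false} := by
  rintro u ⟨hu, -⟩ v ⟨-, hv⟩ heq
  rcases Sym2.eq_iff.1 heq with ⟨huv, -⟩ | ⟨rfl, -⟩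
  · exact huv
  · simp [hu] at hv

/-- `IsHeaviestNeighbor G w f` says that `f` sends every non-isolated vertex of `G` to a neighbor
along an incident edge of maximal weight. Its values at isolated vertices are arbitrary. -/
def IsHeaviestNeighbor [LE K] (G : SimpleGraph V) (w : Sym2 V → K) (f : V → V) : Prop :=
  ∀ v, (∃ u, G.Adj v u) → G.Adj v (f v) ∧ ∀ e ∈ G.incidenceSet v, w e ≤ w s(v, f v)

variable [Fintype V]

/-- The vertices of `G` that are not isolated. -/
def nonisolatedVertices (G : SimpleGraph V) [DecidableRel G.Adj] : Finset V :=
  {v | ∃ u, G.Adj v u}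

variable {G : SimpleGraph V} [DecidableRel G.Adj] {w : Sym2 V → K} {f : V → V}

theorem mem_nonisolatedVertices {v : V} : v ∈ nonisolatedVertices G ↔ ∃ u, G.Adj v u :=
  mem_filter_univ v

theorem IsHeaviestNeighbor.adj [LE K] (hf : IsHeaviestNeighbor G w f) :
    ∀ v ∈ nonisolatedVertices G, G.Adj v (f v) :=
  fun v hv ↦ (hf v (mem_nonisolatedVertices.1 hv)).1

variable [DecidableEq V]

/-- The edges contracted under the coin flips `X`, that is, the edges `s(v, f v)` whose endpoints
have coins `X v = true` and `X (f v) = false`. -/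
def contractedEdges (G : SimpleGraph V) [DecidableRel G.Adj] (f : V → V) (X : V → Bool) :
    Finset (Sym2 V) :=
  {e ∈ G.edgeFinset | ∃ v, (∃ u, G.Adj v u) ∧ X v = true ∧ X (f v) = false ∧ e = s(v, f v)}

theorem contractedEdges_eq_image (hadj : ∀ v ∈ nonisolatedVertices G, G.Adj v (f v))
    (X : V → Bool) :
    contractedEdges G f X =
      {v ∈ nonisolatedVertices G | X v = true ∧ X (f v) = false}.image fun v ↦ s(v, f v) := by
  ext e
  simp only [contractedEdges, mem_nonisolatedVertices, mem_filter, mem_image,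
    SimpleGraph.mem_edgeFinset] at hadj ⊢
  constructor
  · rintro ⟨-, v, hv, htrue, hfalse, rfl⟩
    exact ⟨v, ⟨hv, htrue, hfalse⟩, rfl⟩
  · rintro ⟨v, ⟨hv, htrue, hfalse⟩, rfl⟩
    exact ⟨hadj v hv, v, hv, htrue, hfalse, rfl⟩

theorem sum_contractedEdges [AddCommMonoid K]
    (hadj : ∀ v ∈ nonisolatedVertices G, G.Adj v (f v)) (X : V → Bool) :
    ∑ e ∈ contractedEdges G f X, w e =
      ∑ v ∈ nonisolatedVertices G with X v = true ∧ X (f v) = false, w s(v, f v) := by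
  rw [contractedEdges_eq_image hadj]
  exact sum_image ((injOn_edge_of_true_of_false f X).mono fun v hv ↦ (mem_filter.1 hv).2)

theorem expected_sum_contractedEdges [Field K] [CharZero K]
    (hadj : ∀ v ∈ nonisolatedVertices G, G.Adj v (f v)) :
    (∑ X : V → Bool, ∑ e ∈ contractedEdges G f X, w e) / 2 ^ Fintype.card V =
      (∑ v ∈ nonisolatedVertices G, w s(v, f v)) / 4 := by
  have hquarter {v : V} (hv : v ∈ nonisolatedVertices G) :
      (#{X : V → Bool | X v = true ∧ X (f v) = false} : K) * 4 = 2 ^ Fintype.card V := by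
    exact_mod_cast card_filter_apply_eq_and_apply_eq_mul (hadj v hv).ne true false
  rw [div_eq_div_iff (pow_ne_zero _ two_ne_zero) (by norm_num)]
  calc (∑ X : V → Bool, ∑ e ∈ contractedEdges G f X, w e) * 4
      = (∑ X : V → Bool, ∑ v ∈ nonisolatedVertices G,
          if X v = true ∧ X (f v) = false then w s(v, f v) else 0) * 4 := by
        simp only [sum_contractedEdges hadj, sum_filter]
    _ = ∑ v ∈ nonisolatedVertices G,
          #{X : V → Bool | X v = true ∧ X (f v) = false} * 4 * w s(v, f v) := by
        rw [sum_comm, sum_mul]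
        refine sum_congr rfl fun v _ ↦ ?_
        rw [← sum_filter, sum_const, nsmul_eq_mul, mul_right_comm]
    _ = (∑ v ∈ nonisolatedVertices G, w s(v, f v)) * 2 ^ Fintype.card V := by
        rw [sum_mul]
        exact sum_congr rfl fun v hv ↦ by rw [hquarter hv, mul_comm]

variable {c : ℕ} {tail : Sym2 V → V}

theorem sum_edgeFinset_le_mul_sum_heaviest [Semiring K] [PartialOrder K] [IsOrderedRing K]
    (hw : ∀ e ∈ G.edgeSet, 0 ≤ w e) (htail : IsOrientation G c tail)
    (hf : IsHeaviestNeighbor G w f) :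
    ∑ e ∈ G.edgeFinset, w e ≤ c * ∑ v ∈ nonisolatedVertices G, w s(v, f v) := by
  have hincident {e : Sym2 V} (he : e ∈ G.edgeFinset) : e ∈ G.incidenceSet (tail e) :=
    ⟨SimpleGraph.mem_edgeFinset.1 he, htail.tail_mem e (SimpleGraph.mem_edgeFinset.1 he)⟩
  have hneighbor {e : Sym2 V} (he : e ∈ G.edgeFinset) : ∃ u, G.Adj (tail e) u := by
    obtain ⟨u, hu⟩ := Sym2.mem_iff_exists.1 (hincident he).2
    have hedge := (hincident he).1
    rw [hu] at hedge
    exact ⟨u, hedge⟩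
  calc ∑ e ∈ G.edgeFinset, w e
      ≤ ∑ e ∈ G.edgeFinset, w s(tail e, f (tail e)) :=
        sum_le_sum fun e he ↦ (hf _ (hneighbor he)).2 e (hincident he)
    _ = ∑ v ∈ nonisolatedVertices G, #{e ∈ G.edgeFinset | tail e = v} * w s(v, f v) := by
        rw [← sum_fiberwise_of_maps_to' (t := nonisolatedVertices G) (g := tail)
          (fun e he ↦ mem_nonisolatedVertices.2 (hneighbor he)) fun v ↦ w s(v, f v)]
        simp only [sum_const, nsmul_eq_mul]
    _ ≤ ∑ v ∈ nonisolatedVertices G, c * w s(v, f v) := by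
        refine sum_le_sum fun v hv ↦ mul_le_mul_of_nonneg_right ?_ (hw _ (hf.adj v hv))
        exact Nat.mono_cast (htail.outdegree_le v)
    _ = c * ∑ v ∈ nonisolatedVertices G, w s(v, f v) := (mul_sum ..).symm

theorem expected_contracted_weight_general [Field K] [LinearOrder K] [IsStrictOrderedRing K]
    (hw : ∀ e ∈ G.edgeSet, 0 ≤ w e) (hc : 1 ≤ c)
    (htail : IsOrientation G c tail) (hf : IsHeaviestNeighbor G w f) :
    (∑ e ∈ G.edgeFinset, w e) / (4 * c) ≤
      (∑ X : V → Bool, ∑ e ∈ contractedEdges G f X, w e) / 2 ^ Fintype.card V := by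
  have hc' : (0 : K) < c := by exact_mod_cast hc
  calc (∑ e ∈ G.edgeFinset, w e) / (4 * c)
      ≤ (c * ∑ v ∈ nonisolatedVertices G, w s(v, f v)) / (4 * c) := by
        gcongr
        exact sum_edgeFinset_le_mul_sum_heaviest hw htail hf
    _ = (∑ v ∈ nonisolatedVertices G, w s(v, f v)) / 4 := by
        rw [mul_comm 4, mul_div_mul_left _ _ hc'.ne']
    _ = _ := (expected_sum_contractedEdges hf.adj).symm

end Contraction

open scoped Classical in
/-- Let `G = (V,E)` be a finite simple graph with nonnegative edge weights `w` whose edge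
set is partitioned into `c ≥ 1` forests. For every non-isolated vertex `v` let `f v` be a
heaviest neighbor of `v`. If each vertex flips an independent fair coin `X v`, and
`D = {{v, f v} : v non-isolated, X v = true, X (f v) = false}` is the set of contracted
edges, then the expected total weight of `D` is at least `(∑_{e ∈ E} w e) / (4c)`. -/
theorem expected_contracted_weight
    (V : Type) [Fintype V] [DecidableEq V] (G : SimpleGraph V) [DecidableRel G.Adj]
    (w : Sym2 V → ℝ) (hw : ∀ e ∈ G.edgeSet, 0 ≤ w e)
    (c : ℕ) (hc : 1 ≤ c)
    (fpart : Sym2 V → Fin c)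
    (hforest : ∀ i : Fin c,
      (SimpleGraph.fromEdgeSet {e | e ∈ G.edgeSet ∧ fpart e = i}).IsAcyclic)
    (f : V → V)
    (hf : ∀ v, (∃ u, G.Adj v u) →
      G.Adj v (f v) ∧ ∀ e ∈ G.incidenceSet v, w e ≤ w s(v, f v)) :
    (∑ e ∈ G.edgeFinset, w e) / (4 * c) ≤
      (∑ X : V → Bool,
          ∑ e ∈ G.edgeFinset.filter fun e =>
              ∃ v, (∃ u, G.Adj v u) ∧ X v = true ∧ X (f v) = false ∧ e = s(v, f v),
            w e)
        / 2 ^ Fintype.card V := by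
  obtain ⟨tail, htail⟩ := exists_isOrientation_of_forest_partition G hforest
  rw [Fintype.card_fin] at htail
  exact expected_contracted_weight_general hw hc htail hf
end

section
/- Let G = (V, E) be a finite simple graph with maximum degree at most d, let L : V → Bool be a labeling of the vertices, and let M ⊆ E be a set of edges such that (i) every edge in M has one endpoint labeled true and one endpoint labeled false, and (ii) every vertex labeled true is an endpoint of at most one edge of M. Then every connected component of the spanning subgraph (V, M) has at most d + 1 vertices. -/
/-!
The contracted edges form a graph all of whose components are stars. A `true` vertex has at most one
neighbour, so a walk that leaves a `false` vertex `c` for a neighbour can only come back to `c`: the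
component of `c` is the closed neighbourhood of `c`. A component without `false` vertices has no
edges at all.
-/

theorem encard_neighborSet_eq_degree {V : Type*} (G : SimpleGraph V) (v : V)
    [Fintype (G.neighborSet v)] : (G.neighborSet v).encard = G.degree v := by
  rw [← G.card_neighborSet_eq_degree, Set.coe_fintypeCard]

section StarComponents

variable {V : Type*} {H : SimpleGraph V}

theorem supp_connectedComponentMk_eq_insert_neighborSet {c : V}
    (hleaf : ∀ w ∈ H.neighborSet c, (H.neighborSet w).Subsingleton) :
    (H.connectedComponentMk c).supp = insert c (H.neighborSet c) := by
  ext v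
  rw [SimpleGraph.ConnectedComponent.mem_supp_iff, SimpleGraph.ConnectedComponent.eq,
    SimpleGraph.reachable_comm, Set.mem_insert_iff, SimpleGraph.mem_neighborSet]
  constructor
  · rw [SimpleGraph.reachable_iff_reflTransGen]
    intro hcv
    induction hcv with
    | refl => exact .inl rfl
    | tail _ hab ih =>
      obtain rfl | hca := ih
      · exact .inr hab
      · exact .inl (hleaf _ hca hab hca.symm)
  · rintro (rfl | hcv)
    · exact .rfl
    · exact hcv.reachable

theorem exists_supp_eq_insert_neighborSet {s t : Set V} (hst : H.IsBipartiteWith s t)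
    (hleaf : ∀ v ∈ s, (H.neighborSet v).Subsingleton) (C : H.ConnectedComponent) :
    ∃ c, (c ∈ t ∨ H.IsIsolated c) ∧ C.supp = insert c (H.neighborSet c) := by
  obtain ⟨c, rfl, hc⟩ : ∃ c, H.connectedComponentMk c = C ∧ (c ∈ t ∨ H.IsIsolated c) := by
    obtain ⟨v, rfl⟩ := C.exists_rep
    by_cases hv : H.IsIsolated v
    · exact ⟨v, rfl, .inr hv⟩
    obtain ⟨w, hvw⟩ := H.neighborSet_nonempty.2 hv
    obtain ⟨-, hw⟩ | ⟨hv, -⟩ := hst.mem_of_adj hvw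
    · exact ⟨w, SimpleGraph.ConnectedComponent.sound hvw.symm.reachable, .inl hw⟩
    · exact ⟨v, rfl, .inl hv⟩
  refine ⟨c, hc, supp_connectedComponentMk_eq_insert_neighborSet fun w hcw ↦ ?_⟩
  obtain hct | hisolated := hc
  · exact hleaf w (hst.symm.mem_of_mem_adj hct hcw)
  · exact (hisolated w hcw).elim

theorem encard_supp_le_add_one {s t : Set V} {d : ℕ∞} (hst : H.IsBipartiteWith s t)
    (hleaf : ∀ v ∈ s, (H.neighborSet v).Subsingleton)
    (hdeg : ∀ v ∈ t, (H.neighborSet v).encard ≤ d) (C : H.ConnectedComponent) :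
    C.supp.encard ≤ d + 1 := by
  obtain ⟨c, hc, hsupp⟩ := exists_supp_eq_insert_neighborSet hst hleaf C
  have hcd : (H.neighborSet c).encard ≤ d := by
    obtain hct | hisolated := hc
    · exact hdeg c hct
    · simp [hisolated]
  calc C.supp.encard = (insert c (H.neighborSet c)).encard := by rw [hsupp]
    _ ≤ (H.neighborSet c).encard + 1 := Set.encard_insert_le _ _
    _ ≤ d + 1 := by gcongr

end StarComponents

section FromEdgeSet

variable {V : Type*} {M : Set (Sym2 V)}

theorem neighborSet_fromEdgeSet_subsingleton {v : V} (hv : {e ∈ M | v ∈ e}.Subsingleton) :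
    ((SimpleGraph.fromEdgeSet M).neighborSet v).Subsingleton := fun a ha b hb ↦
  Sym2.congr_right.1 (hv ⟨ha.1, Sym2.mem_mk_left v a⟩ ⟨hb.1, Sym2.mem_mk_left v b⟩)

theorem isBipartiteWith_fromEdgeSet {L : V → Bool} (hL : ∀ a b, s(a, b) ∈ M → L a ≠ L b) :
    (SimpleGraph.fromEdgeSet M).IsBipartiteWith {v | L v = true} {v | L v = false} where
  disjoint := Set.disjoint_left.2 fun v (hv : L v = true) ↦ by simp [hv]
  mem_of_adj a b hab := by
    have hne : L a ≠ L b := hL a b hab.1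
    cases ha : L a <;> cases hb : L b <;> simp_all

end FromEdgeSet

theorem contracted_components_small_general {V : Type*} {G : SimpleGraph V} {d : ℕ∞}
    {L : V → Bool} {M : Set (Sym2 V)}
    (hdeg : ∀ v, L v = false → (G.neighborSet v).encard ≤ d) (hM : M ⊆ G.edgeSet)
    (hbi : ∀ a b : V, s(a, b) ∈ M → L a ≠ L b)
    (hstar : ∀ v : V, L v = true → {e ∈ M | v ∈ e}.Subsingleton)
    (C : (SimpleGraph.fromEdgeSet M).ConnectedComponent) : C.supp.encard ≤ d + 1 := by
  refine encard_supp_le_add_one (isBipartiteWith_fromEdgeSet hbi)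
    (fun v hv ↦ neighborSet_fromEdgeSet_subsingleton (hstar v hv)) (fun v hv ↦ ?_) C
  have hle : SimpleGraph.fromEdgeSet M ≤ G := fun a b hab ↦ hM hab.1
  exact (Set.encard_le_encard (SimpleGraph.neighborSet_mono hle v)).trans (hdeg v hv)

/-- Let `G` have maximum degree at most `d`, let `L` be a Boolean labeling of the vertices
and let `M ⊆ E` be a set of edges such that every edge of `M` joins a `true` vertex to a
`false` vertex and every `true` vertex lies on at most one edge of `M`. Then every connected
component of the spanning subgraph `(V, M)` has at most `d + 1` vertices. -/
theorem contracted_components_small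
    (V : Type) [Fintype V] [DecidableEq V] (G : SimpleGraph V) [DecidableRel G.Adj]
    (d : ℕ) (hdeg : ∀ v, G.degree v ≤ d)
    (L : V → Bool) (M : Set (Sym2 V)) (hM : M ⊆ G.edgeSet)
    (hbi : ∀ a b : V, s(a, b) ∈ M → L a ≠ L b)
    (hstar : ∀ v : V, L v = true → {e ∈ M | v ∈ e}.Subsingleton) :
    ∀ C : (SimpleGraph.fromEdgeSet M).ConnectedComponent,
      (Set.toFinite C.supp).toFinset.card ≤ d + 1 := by
  intro C
  simpa [(Set.toFinite C.supp).encard_eq_coe_toFinset_card, ← ENat.natCast_le_natCast] using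
    contracted_components_small_general
      (fun v _ ↦ (encard_neighborSet_eq_degree G v).trans_le (mod_cast hdeg v)) hM hbi hstar C
end
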